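/- Let n ≥ 2, let 1 ≤ p < n, and let 0 < ε < (n−p)/p. Define u on the open unit ball B₁ ⊆ ℝⁿ by u(x) = exp(−1/|x|^ε) for x ≠ 0 and u(0) = 0, and define V(x) = ε/|x|^{ε+1} for x ≠ 0 (V(0) = 0). Then: (1) u is C^∞ on B₁; (2) u vanishes to infinite order at 0 in the L² sense, i.e. for every m ≥ 0, lim_{r→0} r^{−m} ∫_{B(0,r)} |u|² dv = 0; (3) for every x ∈ B₁ ∖ {0}, ‖fderiv u x‖ ≤ V(x)·u(x); and (4) ∫_{B₁} V(x)^p dv < ∞. In particular, the strong unique continuation property for the differential inequality |∇u| ≤ V|u| fails in general for potentials V ∈ L^p with p < n. -/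

import Mathlib

open MeasureTheory Classical

/-!
The function `u` is radial with profile `exp (-1 / t ^ ε)`, and the exponential beats every power
of `t` at `0⁺`. So the functions `t ^ a * exp (-1 / t ^ δ)`, extended by `0` to `t ≤ 0`, have
derivatives, also at `t = 0`, in their own linear span, whence all of them are smooth. As the norm
is not smooth at the origin, `u` is written as the profile with exponent `ε / 2` applied to the
smooth function `‖x‖ ^ 2`. The same decay gives `u = o(‖x‖ ^ m)` for every `m`, hence vanishing to
infinite order. Off the origin the norm has a gradient of length one, so `|∇u| = V u`. Finally
`V ^ p` is a multiple of `‖x‖ ^ (-(ε + 1) p)`, integrable near `0` because `(ε + 1) p < n`.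
-/

open Asymptotics Filter Metric Module Topology

section FlatPow

/-- The function `t ^ a * exp (-1 / t ^ δ)` on `(0, ∞)`, extended by `0` to `(-∞, 0]`. For `δ > 0`
it is flat at `0`; the power `t ^ a` is there to make the family closed under differentiation
up to linear combinations. -/
noncomputable def flatPow (δ a t : ℝ) : ℝ :=
  if t ≤ 0 then 0 else t ^ a * Real.exp (-(1 / t ^ δ))

variable {δ t : ℝ}

theorem flatPow_of_nonpos (δ a : ℝ) (ht : t ≤ 0) : flatPow δ a t = 0 :=
  if_pos ht

theorem flatPow_of_pos (δ a : ℝ) (ht : 0 < t) :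
    flatPow δ a t = t ^ a * Real.exp (-(1 / t ^ δ)) :=
  if_neg ht.not_ge

theorem flatPow_nonneg (δ a t : ℝ) : 0 ≤ flatPow δ a t := by
  rcases le_or_gt t 0 with ht | ht
  · exact (flatPow_of_nonpos δ a ht).ge
  · rw [flatPow_of_pos δ a ht]
    positivity

theorem flatPow_div_rpow (δ a b t : ℝ) : flatPow δ a t / t ^ b = flatPow δ (a - b) t := by
  rcases le_or_gt t 0 with ht | ht
  · simp only [flatPow_of_nonpos δ _ ht, zero_div]
  · rw [flatPow_of_pos δ _ ht, flatPow_of_pos δ _ ht, Real.rpow_sub ht, mul_div_right_comm]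

theorem flatPow_pow (δ a : ℝ) {k : ℕ} (hk : k ≠ 0) (ht : 0 ≤ t) :
    flatPow δ a (t ^ k) = flatPow (k * δ) (k * a) t := by
  rcases ht.eq_or_lt with rfl | ht
  · rw [zero_pow hk, flatPow_of_nonpos _ _ le_rfl, flatPow_of_nonpos _ _ le_rfl]
  · rw [flatPow_of_pos _ _ (pow_pos ht k), flatPow_of_pos _ _ ht, Real.rpow_natCast_mul ht.le,
      Real.rpow_natCast_mul ht.le]

-- In the variable `s = t ^ (-δ)` this is the decay of `s ^ (-a / δ) * exp (-s)` at infinity.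
theorem tendsto_rpow_mul_exp_neg_one_div_rpow (hδ : 0 < δ) (a : ℝ) :
    Tendsto (fun t : ℝ => t ^ a * Real.exp (-(1 / t ^ δ))) (𝓝[>] 0) (𝓝 0) := by
  have h_subst : Tendsto (fun t : ℝ => t⁻¹ ^ δ) (𝓝[>] 0) atTop :=
    (tendsto_rpow_atTop hδ).comp tendsto_inv_nhdsGT_zero
  refine ((tendsto_rpow_mul_exp_neg_mul_atTop_nhds_zero (-a / δ) 1 one_pos).comp h_subst).congr' ?_
  filter_upwards [self_mem_nhdsWithin] with t (ht : 0 < t)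
  have h_pow : (t⁻¹ ^ δ) ^ (-a / δ) = t ^ a := by
    rw [← Real.rpow_mul (inv_nonneg.2 ht.le), mul_div_cancel₀ _ hδ.ne', Real.inv_rpow ht.le,
      Real.rpow_neg ht.le, inv_inv]
  rw [Function.comp_apply, h_pow, Real.inv_rpow ht.le, neg_one_mul, one_div]

theorem tendsto_flatPow_nhds_zero (hδ : 0 < δ) (a : ℝ) :
    Tendsto (flatPow δ a) (𝓝 0) (𝓝 0) := by
  refine tendsto_const_nhds.if ?_
  simp only [not_le]
  exact tendsto_rpow_mul_exp_neg_one_div_rpow hδ a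

theorem isLittleO_flatPow_rpow (hδ : 0 < δ) (a b : ℝ) :
    flatPow δ a =o[𝓝 0] fun t : ℝ => t ^ b := by
  refine isLittleO_of_tendsto (fun t ht => flatPow_of_nonpos δ a ?_) ?_
  · by_contra! h_pos
    exact (Real.rpow_pos_of_pos h_pos b).ne' ht
  · simpa only [flatPow_div_rpow] using tendsto_flatPow_nhds_zero hδ (a - b)

theorem hasDerivAt_flatPow_of_neg (δ a : ℝ) (ht : t < 0) : HasDerivAt (flatPow δ a) 0 t := by
  refine (hasDerivAt_const t (0 : ℝ)).congr_of_eventuallyEq ?_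
  filter_upwards [gt_mem_nhds ht] with y hy using flatPow_of_nonpos δ a hy.le

theorem hasDerivAt_flatPow_zero (hδ : 0 < δ) (a : ℝ) : HasDerivAt (flatPow δ a) 0 0 := by
  rw [hasDerivAt_iff_isLittleO]
  simpa [flatPow_of_nonpos δ a le_rfl] using isLittleO_flatPow_rpow hδ a 1

theorem hasDerivAt_flatPow_of_pos (δ a : ℝ) (ht : 0 < t) :
    HasDerivAt (flatPow δ a) (a * flatPow δ (a - 1) t + δ * flatPow δ (a - δ - 1) t) t := by
  have h_exp : HasDerivAt (fun t : ℝ => Real.exp (-(1 / t ^ δ)))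
      (Real.exp (-(1 / t ^ δ)) * (δ * t ^ (-δ - 1))) t := by
    have h_inv := (Real.hasDerivAt_rpow_const (p := -δ) (Or.inl ht.ne')).neg.exp
    refine (h_inv.congr_of_eventuallyEq ?_).congr_deriv ?_
    · filter_upwards [lt_mem_nhds ht] with y hy
      simp [Real.rpow_neg hy.le]
    · simp [Real.rpow_neg ht.le]
  have h_mul := (Real.hasDerivAt_rpow_const (p := a) (Or.inl ht.ne')).mul h_exp
  refine (h_mul.congr_of_eventuallyEq ?_).congr_deriv ?_
  · filter_upwards [lt_mem_nhds ht] with y hy using flatPow_of_pos δ a hy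
  · rw [flatPow_of_pos _ _ ht, flatPow_of_pos _ _ ht,
      show a - δ - 1 = a + (-δ - 1) by ring, Real.rpow_add ht]
    ring

theorem hasDerivAt_flatPow (hδ : 0 < δ) (a t : ℝ) :
    HasDerivAt (flatPow δ a) (a * flatPow δ (a - 1) t + δ * flatPow δ (a - δ - 1) t) t := by
  rcases le_or_gt t 0 with ht | ht
  · simp only [flatPow_of_nonpos δ _ ht, mul_zero, add_zero]
    rcases ht.lt_or_eq with ht | rfl
    · exact hasDerivAt_flatPow_of_neg δ a ht
    · exact hasDerivAt_flatPow_zero hδ a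
  · exact hasDerivAt_flatPow_of_pos δ a ht

theorem contDiff_flatPow (hδ : 0 < δ) (a : ℝ) : ContDiff ℝ (⊤ : ℕ∞) (flatPow δ a) := by
  refine contDiff_infty.2 fun k => ?_
  induction k generalizing a with
  | zero =>
    exact contDiff_zero.2
      (continuous_iff_continuousAt.2 fun t => (hasDerivAt_flatPow hδ a t).continuousAt)
  | succ k ih =>
    have h_deriv : deriv (flatPow δ a) =
        fun t => a * flatPow δ (a - 1) t + δ * flatPow δ (a - δ - 1) t :=
      funext fun t => (hasDerivAt_flatPow hδ a t).deriv
    rw [Nat.cast_succ, contDiff_succ_iff_deriv, h_deriv]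
    exact ⟨fun t => (hasDerivAt_flatPow hδ a t).differentiableAt, by simp,
      (contDiff_const.mul (ih _)).add (contDiff_const.mul (ih _))⟩

end FlatPow

section Radial

theorem norm_fderiv_comp_norm {E : Type*} [NormedAddCommGroup E] [NormedSpace ℝ E] [Nontrivial E]
    {f : ℝ → ℝ} {f' : ℝ} {x : E} (hf : HasDerivAt f f' ‖x‖)
    (hx : DifferentiableAt ℝ (fun y : E => ‖y‖) x) :
    ‖fderiv ℝ (fun y : E => f ‖y‖) x‖ = |f'| := by
  have h_comp : HasFDerivAt (fun y : E => f ‖y‖) (f' • fderiv ℝ (fun y : E => ‖y‖) x) x :=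
    hf.comp_hasFDerivAt x hx.hasFDerivAt
  rw [h_comp.fderiv, norm_smul, norm_fderiv_norm hx, mul_one, Real.norm_eq_abs]

variable {E : Type*} [NormedAddCommGroup E] [InnerProductSpace ℝ E] {δ : ℝ}

theorem contDiff_flatPow_norm (hδ : 0 < δ) (a : ℝ) :
    ContDiff ℝ (⊤ : ℕ∞) fun x : E => flatPow δ a ‖x‖ := by
  have h_sq (x : E) : flatPow (δ / 2) (a / 2) (‖x‖ ^ 2) = flatPow δ a ‖x‖ := by
    rw [flatPow_pow _ _ two_ne_zero (norm_nonneg x), Nat.cast_ofNat,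
      mul_div_cancel₀ δ two_ne_zero, mul_div_cancel₀ a two_ne_zero]
  simpa only [Function.comp_def, h_sq] using
    (contDiff_flatPow (half_pos hδ) (a / 2)).comp (contDiff_norm_sq ℝ (E := E))

theorem norm_fderiv_flatPow_norm (hδ : 0 < δ) {x : E} (hx : x ≠ 0) :
    ‖fderiv ℝ (fun y : E => flatPow δ 0 ‖y‖) x‖ = δ / ‖x‖ ^ (δ + 1) * flatPow δ 0 ‖x‖ := by
  have : Nontrivial E := nontrivial_of_ne x 0 hx
  rw [norm_fderiv_comp_norm (hasDerivAt_flatPow hδ 0 ‖x‖) (differentiableAt_id.norm ℝ hx),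
    zero_mul, zero_add, abs_of_nonneg (mul_nonneg hδ.le (flatPow_nonneg _ _ _)),
    div_mul_eq_mul_div, mul_div_assoc, flatPow_div_rpow, sub_sub]

end Radial

section Integral

theorem isLittleO_setIntegral_ball {E F : Type*} [SeminormedAddCommGroup E] [MeasurableSpace E]
    {μ : Measure E} [IsLocallyFiniteMeasure μ] [NormedAddCommGroup F] [NormedSpace ℝ F]
    {f : E → F} {m : ℝ} (hm : 0 ≤ m) (hf : f =o[𝓝 0] fun x : E => ‖x‖ ^ m) :
    (fun r : ℝ => ∫ x in ball 0 r, f x ∂μ) =o[𝓝[>] 0] fun r : ℝ => r ^ m := by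
  obtain ⟨R, hR, h_fin⟩ : ∃ R > 0, μ (ball 0 R) < ⊤ := by
    obtain ⟨s, hs, hμs⟩ := μ.finiteAt_nhds 0
    obtain ⟨R, hR, hRs⟩ := Metric.mem_nhds_iff.1 hs
    exact ⟨R, hR, (measure_mono hRs).trans_lt hμs⟩
  have h_vol : (fun r : ℝ => μ.real (ball (0 : E) r)) =O[𝓝[>] 0] fun _ => (1 : ℝ) := by
    refine IsBigO.of_bound (μ.real (ball 0 R)) ?_
    filter_upwards [Ioo_mem_nhdsGT hR] with r hr
    simpa [abs_of_nonneg] using measureReal_mono (ball_subset_ball hr.2.le) h_fin.ne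
  have h_int : (fun r : ℝ => ∫ x in ball 0 r, f x ∂μ) =o[𝓝[>] 0]
      fun r : ℝ => r ^ m * μ.real (ball (0 : E) r) := by
    refine isLittleO_iff.2 fun c hc => ?_
    obtain ⟨ρ, hρ, hfρ⟩ := Metric.eventually_nhds_iff_ball.1 (hf.def hc)
    filter_upwards [Ioo_mem_nhdsGT (lt_min hR hρ)] with r ⟨hr, hr_lt⟩
    have h_bound : ∀ x ∈ ball (0 : E) r, ‖f x‖ ≤ c * r ^ m := fun x hx => by
      refine (hfρ x (ball_subset_ball (hr_lt.le.trans (min_le_right R ρ)) hx)).trans ?_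
      rw [Real.norm_of_nonneg (by positivity)]
      gcongr
      exact (mem_ball_zero_iff.1 hx).le
    have h_fin' : μ (ball 0 r) < ⊤ :=
      (measure_mono (ball_subset_ball (hr_lt.le.trans (min_le_left R ρ)))).trans_lt h_fin
    rw [Real.norm_of_nonneg (by positivity), ← mul_assoc]
    exact norm_setIntegral_le_of_norm_le_const h_fin' h_bound
  simpa only [mul_one] using h_int.trans_isBigO ((isBigO_refl _ _).mul h_vol)

theorem locallyIntegrable_norm_rpow {E : Type*} [NormedAddCommGroup E] [NormedSpace ℝ E]
    [FiniteDimensional ℝ E] [Nontrivial E] [MeasurableSpace E] [BorelSpace E] {μ : Measure E}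
    [μ.IsAddHaarMeasure] {s : ℝ} (hs : -(finrank ℝ E : ℝ) < s) :
    LocallyIntegrable (fun x : E => ‖x‖ ^ s) μ := by
  refine locallyIntegrable_of_norm_le_rpow (C := 1) (α := -s) finrank_pos (neg_lt.1 hs)
    (.of_forall fun x => ?_)
    (measurable_norm.pow_const s).aestronglyMeasurable
  rw [Real.norm_of_nonneg (by positivity), neg_neg, one_mul]

end Integral

theorem failure_of_sucp_for_subcritical_potentials_general {E : Type*} [NormedAddCommGroup E]
    [InnerProductSpace ℝ E] [FiniteDimensional ℝ E] [MeasurableSpace E] [BorelSpace E]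
    (μ : Measure E) [μ.IsAddHaarMeasure] {p ε : ℝ} (hp : 0 < p) (hε : 0 < ε)
    (hεp : ε < ((finrank ℝ E : ℝ) - p) / p) {u V : E → ℝ} (hu_zero : u 0 = 0)
    (hu : ∀ x ≠ 0, u x = Real.exp (-(1 / ‖x‖ ^ ε))) (hV : ∀ x ≠ 0, V x = ε / ‖x‖ ^ (ε + 1)) :
    ContDiff ℝ (⊤ : ℕ∞) u ∧
    (∀ m : ℝ, 0 ≤ m →
      Tendsto (fun r : ℝ => r ^ (-m) * ∫ x in ball 0 r, |u x| ^ 2 ∂μ) (𝓝[>] 0) (𝓝 0)) ∧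
    (∀ x ≠ 0, ‖fderiv ℝ u x‖ = V x * u x) ∧
    LocallyIntegrable (fun x => V x ^ p) μ := by
  have h_dim : (ε + 1) * p < finrank ℝ E := by
    rw [lt_div_iff₀ hp] at hεp
    linarith
  have : Nontrivial E := nontrivial_of_finrank_pos (R := ℝ) <|
    Nat.cast_pos.1 ((by positivity : 0 < (ε + 1) * p).trans h_dim)
  obtain rfl : u = fun x => flatPow ε 0 ‖x‖ := by
    funext x
    rcases eq_or_ne x 0 with rfl | hx
    · rw [hu_zero, norm_zero, flatPow_of_nonpos _ _ le_rfl]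
    · rw [hu x hx, flatPow_of_pos _ _ (norm_pos_iff.2 hx), Real.rpow_zero, one_mul]
  refine ⟨contDiff_flatPow_norm hε 0, fun m hm => ?_, fun x hx => ?_, ?_⟩
  · have h_flat : (fun x : E => |flatPow ε 0 ‖x‖| ^ 2) =o[𝓝 0] fun x => ‖x‖ ^ m := by
      have h_half := ((isLittleO_flatPow_rpow hε 0 (m / 2)).comp_tendsto
        (tendsto_norm_zero (E := E))).pow two_pos
      simpa [Function.comp_def, ← Real.rpow_mul_natCast] using h_half
    refine (isLittleO_setIntegral_ball (μ := μ) hm h_flat).tendsto_div_nhds_zero.congr' ?_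
    filter_upwards [self_mem_nhdsWithin] with r (hr : 0 < r)
    rw [Real.rpow_neg hr.le, div_eq_inv_mul]
  · rw [norm_fderiv_flatPow_norm hε hx, hV x hx]
  · have h_rpow : LocallyIntegrable (fun x : E => ε ^ p * ‖x‖ ^ (-((ε + 1) * p))) μ :=
      (locallyIntegrable_norm_rpow (neg_lt_neg h_dim)).smul (ε ^ p)
    refine h_rpow.congr ?_
    filter_upwards [Measure.ae_ne μ 0] with x hx
    rw [hV x hx, Real.div_rpow hε.le (by positivity), ← Real.rpow_mul (norm_nonneg x),
      Real.rpow_neg (norm_nonneg x), div_eq_mul_inv]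

/-- Example 2.5: for `1 ≤ p < n` and `0 < ε < (n−p)/p`, the function
`u(x) = exp(−1/|x|^ε)` (with `u(0) = 0`) is smooth on `B₁`, vanishes to infinite
order at `0` in the `L²` sense, and satisfies `|∇u| ≤ V·u` off the origin with
`V(x) = ε/|x|^{ε+1} ∈ L^p(B₁)`; hence strong unique continuation fails for
`L^p` potentials with `p < n`. -/
theorem failure_of_sucp_for_subcritical_potentials (n : ℕ) (hn : 2 ≤ n)
    (p : ℝ) (hp1 : 1 ≤ p) (hpn : p < n)
    (ε : ℝ) (hε0 : 0 < ε) (hε1 : ε < ((n : ℝ) - p) / p)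
    (u V : EuclideanSpace ℝ (Fin n) → ℝ)
    (hu : ∀ x : EuclideanSpace ℝ (Fin n),
      u x = if x = 0 then 0 else Real.exp (-(1 / ‖x‖ ^ ε)))
    (hV : ∀ x : EuclideanSpace ℝ (Fin n),
      V x = if x = 0 then 0 else ε / ‖x‖ ^ (ε + 1)) :
    ContDiffOn ℝ (⊤ : ℕ∞) u (Metric.ball 0 1) ∧
    (∀ m : ℝ, 0 ≤ m →
      Filter.Tendsto
        (fun r : ℝ => r ^ (-m) * ∫ x in Metric.ball (0 : EuclideanSpace ℝ (Fin n)) r, |u x| ^ 2)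
        (nhdsWithin 0 (Set.Ioi 0)) (nhds 0)) ∧
    (∀ x ∈ Metric.ball (0 : EuclideanSpace ℝ (Fin n)) 1 \ {0},
      ‖fderiv ℝ u x‖ ≤ V x * u x) ∧
    IntegrableOn (fun x => V x ^ p) (Metric.ball 0 1) volume := by
  obtain ⟨h_smooth, h_flat, h_grad, h_int⟩ := failure_of_sucp_for_subcritical_potentials_general
    volume (by linarith : 0 < p) hε0 (by simpa using hε1) (u := u) (V := V) (by simp [hu])
    (fun x hx => by simp [hu, hx]) (fun x hx => by simp [hV, hx])
  exact ⟨h_smooth.contDiffOn, h_flat, fun x hx => (h_grad x hx.2).le,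
    (h_int.integrableOn_isCompact (isCompact_closedBall 0 1)).mono_set ball_subset_closedBall⟩
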